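/- arXiv:2303.07222 — 2 statements merged into one kernel-verified Lean document; each statement's English description precedes it below -/
import Mathlib

section
/- Let $T>0$, $u_0\in\mathbb{C}$ with $\Re(u_0)\le 0$, and let $a,b,c:[0,T]\to\mathbb{C}$ be measurable bounded functions with $\Im(a(t))=0$, $a(t)>0$, and $\Re(c(t)) + \Im(b(t))^2/(4a(t)) \le 0$ for all $t\le T$. Then any solution $\psi$ of the Riccati ODE $\psi'(t)=a(t)\psi(t)^2+b(t)\psi(t)+c(t)$, $\psi(0)=u_0$, on $[0,t^*]\subseteq[0,T]$ satisfies the a priori bound $|\psi(t)| \le C(|u_0| + \int_0^T |c(s)|ds)$ for all $t\le t^*$, where $C=\sup_{s,s'\in[0,T]^2} e^{\int_s^{s'}\Re(b(u))du}$. -/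
open MeasureTheory Set

lemma aux_int {τ K : ℝ} (h0 : 0 ≤ τ) {f : ℝ → ℂ}
    (hm : AEStronglyMeasurable f (volume.restrict (Icc 0 τ)))
    (hb : ∀ t ∈ Icc (0:ℝ) τ, ‖f t‖ ≤ K) : IntervalIntegrable f volume 0 τ := by
  rw [intervalIntegrable_iff_integrableOn_Icc_of_le h0]
  refine Integrable.of_bound (C := K) hm ?_
  exact (ae_restrict_iff' measurableSet_Icc).2 (ae_of_all _ hb)

lemma aux_sub {τ : ℝ} {f : ℝ → ℂ} (hi : IntervalIntegrable f volume 0 τ) {s t : ℝ}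
    (hs : s ∈ Icc (0:ℝ) τ) (ht : t ∈ Icc (0:ℝ) τ) : IntervalIntegrable f volume s t := by
  apply hi.mono_set
  rw [uIcc_of_le (hs.1.trans hs.2)]
  exact uIcc_subset_Icc hs ht

lemma aux_lip {τ K : ℝ} (h0 : 0 ≤ τ) (hK : 0 ≤ K) {f : ℝ → ℂ}
    (hi : IntervalIntegrable f volume 0 τ)
    (hb : ∀ t ∈ Icc (0:ℝ) τ, ‖f t‖ ≤ K) :
    LipschitzOnWith K.toNNReal (fun x => ∫ u in (0:ℝ)..x, f u) (uIcc 0 τ) := by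
  rw [uIcc_of_le h0]
  apply LipschitzOnWith.of_dist_le_mul
  intro x hx y hy
  have h0m : (0:ℝ) ∈ Icc (0:ℝ) τ := ⟨le_rfl, h0⟩
  rw [dist_eq_norm, intervalIntegral.integral_interval_sub_left (aux_sub hi h0m hx)
    (aux_sub hi h0m hy), Real.coe_toNNReal _ hK, Real.dist_eq]
  apply intervalIntegral.norm_integral_le_of_norm_le_const
  intro u hu
  exact hb u (uIcc_subset_Icc hy hx (uIoc_subset_uIcc hu))

/-- Variation of constants. -/
lemma aux_voc {τ K : ℝ} (h0 : 0 ≤ τ) (hK : 0 ≤ K) {g c ψ : ℝ → ℂ}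
    (hgm : AEStronglyMeasurable g (volume.restrict (Icc 0 τ)))
    (hg : ∀ t ∈ Icc (0:ℝ) τ, ‖g t‖ ≤ K)
    (hcm : AEStronglyMeasurable c (volume.restrict (Icc 0 τ)))
    (hc : ∀ t ∈ Icc (0:ℝ) τ, ‖c t‖ ≤ K)
    (hode : ∀ t ∈ Icc (0:ℝ) τ, HasDerivAt ψ (g t * ψ t + c t) t) :
    Complex.exp (-∫ u in (0:ℝ)..τ, g u) * ψ τ - ∫ s in (0:ℝ)..τ,
      Complex.exp (-∫ u in (0:ℝ)..s, g u) * c s = ψ 0 := by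
  have hgi := aux_int h0 hgm hg
  have hAl := aux_lip h0 hK hgi hg
  set A : ℝ → ℂ := fun x => ∫ u in (0:ℝ)..x, g u with hA
  have hAac := hAl.absolutelyContinuousOnInterval
  obtain ⟨R, hR⟩ := hAac.exists_bound
  have hEl : ∃ L, LipschitzOnWith L Complex.exp (Metric.closedBall (0:ℂ) R) := by
    have : ContDiffOn ℝ 1 Complex.exp (Metric.closedBall (0:ℂ) R) :=
      (Complex.contDiff_exp (𝕜 := ℝ)).contDiffOn
    exact this.exists_lipschitzOnWith (by decide) (convex_closedBall _ _)
      (isCompact_closedBall _ _)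
  obtain ⟨L, hL⟩ := hEl
  have hGl : LipschitzOnWith (L * K.toNNReal) (fun x => Complex.exp (-A x)) (uIcc 0 τ) := by
    apply hL.comp (f := fun x => -A x)
    · exact hAl.neg
    · intro x hx
      simpa using hR x hx
  have hGac := hGl.absolutelyContinuousOnInterval
  have hGc := hGac.continuousOn
  rw [uIcc_of_le h0] at hGc
  obtain ⟨KG, hKG⟩ := hGac.exists_bound
  rw [uIcc_of_le h0] at hKG
  have hKG0 : 0 ≤ KG := (norm_nonneg _).trans (hKG 0 ⟨le_rfl, h0⟩)
  have hψc : ContinuousOn ψ (Icc 0 τ) := fun t ht => (hode t ht).continuousAt.continuousWithinAt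
  obtain ⟨Kψ, hKψ⟩ := isCompact_Icc.exists_bound_of_continuousOn hψc
  have hKψ0 : 0 ≤ Kψ := (norm_nonneg _).trans (hKψ 0 ⟨le_rfl, h0⟩)
  have hψl : LipschitzOnWith (K * Kψ + K).toNNReal ψ (uIcc 0 τ) := by
    rw [uIcc_of_le h0]
    apply (convex_Icc (0:ℝ) τ).lipschitzOnWith_of_nnnorm_hasDerivWithin_le
      (fun t ht => (hode t ht).hasDerivWithinAt)
    intro t ht
    rw [← NNReal.coe_le_coe, Real.coe_toNNReal _ (by positivity), coe_nnnorm]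
    refine (norm_add_le _ _).trans (add_le_add ?_ (hc t ht))
    rw [norm_mul]
    exact mul_le_mul (hg t ht) (hKψ t ht) (norm_nonneg _) hK
  have hψac := hψl.absolutelyContinuousOnInterval
  have hGcm : AEStronglyMeasurable (fun s => Complex.exp (-A s) * c s)
      (volume.restrict (Icc 0 τ)) :=
    (hGc.aestronglyMeasurable measurableSet_Icc).mul hcm
  have hGcb : ∀ t ∈ Icc (0:ℝ) τ, ‖Complex.exp (-A t) * c t‖ ≤ KG * K := by
    intro t ht
    rw [norm_mul]
    exact mul_le_mul (hKG t ht) (hc t ht) (norm_nonneg _) hKG0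
  have hIi := aux_int h0 hGcm hGcb
  have hIac := (aux_lip h0 (by positivity) hIi hGcb).absolutelyContinuousOnInterval
  have hFac := (hGac.smul hψac).sub hIac
  have h0m : (0:ℝ) ∈ uIcc 0 τ := left_mem_uIcc
  obtain ⟨D, hD⟩ := hFac.const_of_ae_hasDerivAt_zero (by
    filter_upwards [hgi.ae_hasDerivAt_integral, hIi.ae_hasDerivAt_integral] with x h1 h2 hx
    have e1 : HasDerivAt (fun x => Complex.exp (-A x)) (Complex.exp (-A x) * -g x) x :=
      (h1 hx 0 h0m).neg.cexp
    have e2 := h2 hx 0 h0m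
    have e3 := hode x (by rwa [uIcc_of_le h0] at hx)
    have e4 := (e1.mul e3).sub e2
    convert! e4 using 1
    ring)
  have r1 := hD τ right_mem_uIcc
  have r2 := hD 0 h0m
  simp [hA] at r1 r2
  rw [r1, r2]

lemma aux_re {τ M : ℝ} {u0 : ℂ} (h0 : 0 ≤ τ) (hu0 : u0.re ≤ 0) {a b c ψ : ℝ → ℂ}
    (hbdd : ∀ t ∈ Icc (0:ℝ) τ, ‖a t‖ ≤ M ∧ ‖b t‖ ≤ M ∧ ‖c t‖ ≤ M)
    (haim : ∀ t ∈ Icc (0:ℝ) τ, (a t).im = 0)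
    (hapos : ∀ t ∈ Icc (0:ℝ) τ, 0 < (a t).re)
    (hcond : ∀ t ∈ Icc (0:ℝ) τ, (c t).re + (b t).im ^ 2 / (4 * (a t).re) ≤ 0)
    (hψ0 : ψ 0 = u0)
    (hode : ∀ t ∈ Icc (0:ℝ) τ, HasDerivAt ψ (a t * ψ t ^ 2 + b t * ψ t + c t) t) :
    ∀ t ∈ Icc (0:ℝ) τ, (ψ t).re ≤ 0 := by
  have hψc : ContinuousOn ψ (Icc 0 τ) := fun t ht => (hode t ht).continuousAt.continuousWithinAt
  obtain ⟨Kψ, hKψ⟩ := isCompact_Icc.exists_bound_of_continuousOn hψc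
  have hKψ0 : 0 ≤ Kψ := (norm_nonneg _).trans (hKψ 0 ⟨le_rfl, h0⟩)
  have hM : 0 ≤ M := (norm_nonneg _).trans (hbdd 0 ⟨le_rfl, h0⟩).1
  set L := M * Kψ + M + 1 with hL
  have key : ∀ ε > 0, ∀ t ∈ Icc (0:ℝ) τ, (ψ t).re ≤ ε * Real.exp (L * t) := by
    intro ε hε
    have hre : ∀ t ∈ Icc (0:ℝ) τ, HasDerivAt (fun t => (ψ t).re)
        ((a t * ψ t ^ 2 + b t * ψ t + c t).re) t := by
      intro t ht
      exact Complex.reCLM.hasFDerivAt.comp_hasDerivAt t (hode t ht)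
    have hB : ∀ x, HasDerivAt (fun t => ε * Real.exp (L * t))
        (ε * (Real.exp (L * x) * L)) x := by
      intro x
      have := (((hasDerivAt_id x).const_mul L).exp).const_mul ε
      simpa using this
    apply image_le_of_deriv_right_lt_deriv_boundary
      (f := fun t => (ψ t).re)
      (f' := fun t => (a t * ψ t ^ 2 + b t * ψ t + c t).re)
      (fun t ht => (hre t ht).continuousAt.continuousWithinAt)
      (fun t ht => (hre t (Ico_subset_Icc_self ht)).hasDerivWithinAt)
      (B := fun t => ε * Real.exp (L * t)) (B' := fun x => ε * (Real.exp (L * x) * L)) ?_ hB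
    · intro t ht' hEq
      have ht := Ico_subset_Icc_self ht'
      have hx : 0 < (ψ t).re := by
        rw [show (ψ t).re = ε * Real.exp (L * t) from hEq]; positivity
      have e : ε * (Real.exp (L * t) * L) = (ψ t).re * L := by
        rw [show (ψ t).re = ε * Real.exp (L * t) from hEq]; ring
      simp only [e]
      have hap := hapos t ht
      have ha1 : (a t).re ≤ M := (Complex.re_le_norm _).trans (hbdd t ht).1
      have hb1 : (b t).re ≤ M := (Complex.re_le_norm _).trans (hbdd t ht).2.1
      have hx1 : (ψ t).re ≤ Kψ := (Complex.re_le_norm _).trans (hKψ t ht)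
      have hc1 := hcond t ht
      simp only [Complex.add_re, Complex.mul_re, pow_two, haim t ht, Complex.mul_im]
      have sq : 0 ≤ (a t).re * ((ψ t).im + (b t).im / (2 * (a t).re)) ^ 2 := by positivity
      have sq' : (a t).re * ((ψ t).im + (b t).im / (2 * (a t).re)) ^ 2
          = (a t).re * (ψ t).im ^ 2 + (b t).im * (ψ t).im + (b t).im ^ 2 / (4 * (a t).re) := by
        field_simp; ring
      have h1 : (a t).re * (ψ t).re ≤ M * Kψ := mul_le_mul ha1 hx1 hx.le hM
      have h2 : (ψ t).re * ((a t).re * (ψ t).re) ≤ (ψ t).re * (M * Kψ) := by gcongr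
      have h3 : (ψ t).re * (b t).re ≤ (ψ t).re * M := by gcongr
      rw [hL]
      nlinarith
    · simp [hψ0]; linarith
  intro t ht
  by_contra! h
  have := key ((ψ t).re / (2 * Real.exp (L * t))) (by positivity) t ht
  have e : (ψ t).re / (2 * Real.exp (L * t)) * Real.exp (L * t) = (ψ t).re / 2 := by
    field_simp
  linarith

/-- A priori bound for solutions of the complex Riccati ODE. -/
theorem stmt1 (T : ℝ) (hT : 0 < T) (u0 : ℂ) (hu0 : u0.re ≤ 0)
    (a b c : ℝ → ℂ) (ha : Measurable a) (hb : Measurable b) (hc : Measurable c)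
    (M : ℝ) (hbdd : ∀ t ∈ Icc (0:ℝ) T, ‖a t‖ ≤ M ∧ ‖b t‖ ≤ M ∧ ‖c t‖ ≤ M)
    (haim : ∀ t ∈ Icc (0:ℝ) T, (a t).im = 0)
    (hapos : ∀ t ∈ Icc (0:ℝ) T, 0 < (a t).re)
    (hcond : ∀ t ∈ Icc (0:ℝ) T, (c t).re + (b t).im ^ 2 / (4 * (a t).re) ≤ 0)
    (tstar : ℝ) (ht1 : 0 < tstar) (ht2 : tstar ≤ T)
    (ψ : ℝ → ℂ) (hψ0 : ψ 0 = u0)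
    (hode : ∀ t ∈ Icc (0:ℝ) tstar, HasDerivAt ψ (a t * ψ t ^ 2 + b t * ψ t + c t) t)
    (C : ℝ)
    (hC : C = sSup {x : ℝ | ∃ s ∈ Icc (0:ℝ) T, ∃ s' ∈ Icc (0:ℝ) T,
      x = Real.exp (∫ u in s..s', (b u).re)}) :
    ∀ t ∈ Icc (0:ℝ) tstar, ‖ψ t‖ ≤ C * (‖u0‖ + ∫ s in (0:ℝ)..T, ‖c s‖) := by
  intro t ht
  have hM : 0 ≤ M := (norm_nonneg _).trans (hbdd 0 ⟨le_rfl, hT.le⟩).1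
  have sub : Icc (0:ℝ) t ⊆ Icc 0 T := Icc_subset_Icc_right (ht.2.trans ht2)
  have sub' : Icc (0:ℝ) t ⊆ Icc 0 tstar := Icc_subset_Icc_right ht.2
  have hode' := fun s hs => hode s (sub' hs)
  have hre := aux_re ht.1 hu0 (fun s hs => hbdd s (sub hs)) (fun s hs => haim s (sub hs))
    (fun s hs => hapos s (sub hs)) (fun s hs => hcond s (sub hs)) hψ0 hode'
  have hψc : ContinuousOn ψ (Icc 0 t) := fun s hs => (hode' s hs).continuousAt.continuousWithinAt
  obtain ⟨Kψ, hKψ⟩ := isCompact_Icc.exists_bound_of_continuousOn hψc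
  have hKψ0 : 0 ≤ Kψ := (norm_nonneg _).trans (hKψ 0 ⟨le_rfl, ht.1⟩)
  set g : ℝ → ℂ := fun s => a s * ψ s + b s with hgdef
  have hgm : AEStronglyMeasurable g (volume.restrict (Icc 0 t)) :=
    (ha.aestronglyMeasurable.mul (hψc.aestronglyMeasurable measurableSet_Icc)).add
      hb.aestronglyMeasurable
  have hgb : ∀ s ∈ Icc (0:ℝ) t, ‖g s‖ ≤ M * Kψ + M := by
    intro s hs
    refine (norm_add_le _ _).trans (add_le_add ?_ (hbdd s (sub hs)).2.1)
    rw [norm_mul]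
    exact mul_le_mul (hbdd s (sub hs)).1 (hKψ s hs) (norm_nonneg _) hM
  have hMK : 0 ≤ M * Kψ := by positivity
  have voc := aux_voc ht.1 (K := M * Kψ + M) (by positivity) hgm hgb (c := c)
    hc.aestronglyMeasurable (fun s hs => (hbdd s (sub hs)).2.2.trans (by linarith)) (ψ := ψ)
    (fun s hs => by
      have := hode' s hs
      convert this using 1
      simp only [hgdef]; ring)
  have hgi := aux_int ht.1 hgm hgb
  have hbi : IntervalIntegrable b volume 0 T :=
    aux_int hT.le hb.aestronglyMeasurable (fun s hs => (hbdd s hs).2.1)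
  have hci : IntervalIntegrable c volume 0 T :=
    aux_int hT.le hc.aestronglyMeasurable (fun s hs => (hbdd s hs).2.2)
  have h0T : (0:ℝ) ∈ Icc (0:ℝ) T := ⟨le_rfl, hT.le⟩
  have h0t : (0:ℝ) ∈ Icc (0:ℝ) t := ⟨le_rfl, ht.1⟩
  have htt : t ∈ Icc (0:ℝ) t := ⟨ht.1, le_rfl⟩
  -- the supremum is attained as an upper bound
  have hCle : ∀ s ∈ Icc (0:ℝ) T, ∀ s' ∈ Icc (0:ℝ) T,
      Real.exp (∫ u in s..s', (b u).re) ≤ C := by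
    intro s hs s' hs'
    rw [hC]
    refine le_csSup ⟨Real.exp (M * T), ?_⟩ ⟨s, hs, s', hs', rfl⟩
    rintro x ⟨r, hr, r', hr', rfl⟩
    apply Real.exp_le_exp.2
    refine (Real.le_norm_self _).trans ?_
    refine (intervalIntegral.norm_integral_le_of_norm_le_const (C := M) ?_).trans ?_
    · intro u hu
      have hu' := uIcc_subset_Icc hr hr' (uIoc_subset_uIcc hu)
      exact (Complex.abs_re_le_norm _).trans (hbdd u hu').2.1
    · gcongr
      rw [abs_le]
      constructor <;> linarith [hr.1, hr.2, hr'.1, hr'.2]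
  have hC0 : 0 ≤ C := (Real.exp_pos _).le.trans (hCle 0 h0T 0 h0T)
  have hexp : ∀ s ∈ Icc (0:ℝ) t, ‖Complex.exp (∫ u in (0:ℝ)..t, g u) *
      Complex.exp (-∫ u in (0:ℝ)..s, g u)‖ ≤ C := by
    intro s hs
    rw [← Complex.exp_add, ← sub_eq_add_neg,
      intervalIntegral.integral_interval_sub_left (aux_sub hgi h0t htt) (aux_sub hgi h0t hs),
      Complex.norm_exp]
    refine le_trans ?_ (hCle s (sub hs) t (sub htt))
    apply Real.exp_le_exp.2
    have hi := aux_sub hgi hs htt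
    have hbi' := aux_sub hbi (sub hs) (sub htt)
    have e : (∫ u in s..t, g u).re = ∫ u in s..t, (g u).re :=
      (Complex.reCLM.intervalIntegral_comp_comm hi).symm
    rw [e]
    refine intervalIntegral.integral_mono_on hs.2 ?_ ?_ ?_
    · exact ⟨hi.1.re, hi.2.re⟩
    · exact ⟨hbi'.1.re, hbi'.2.re⟩
    · intro u hu
      have hu' : u ∈ Icc (0:ℝ) t := ⟨hs.1.trans hu.1, hu.2⟩
      simp only [hgdef, Complex.add_re, Complex.mul_re, haim u (sub hu')]
      nlinarith [hapos u (sub hu'), hre u hu']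
  have hψt : ψ t = Complex.exp (∫ u in (0:ℝ)..t, g u) * Complex.exp (-∫ u in (0:ℝ)..(0:ℝ), g u) * u0
      + ∫ s in (0:ℝ)..t, Complex.exp (∫ u in (0:ℝ)..t, g u) *
        Complex.exp (-∫ u in (0:ℝ)..s, g u) * c s := by
    have h1 : Complex.exp (∫ u in (0:ℝ)..t, g u) * Complex.exp (-∫ u in (0:ℝ)..t, g u) = 1 := by
      rw [← Complex.exp_add]; simp
    simp_rw [mul_assoc, intervalIntegral.integral_const_mul]
    rw [intervalIntegral.integral_same, neg_zero, Complex.exp_zero, ← hψ0, ← voc]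
    linear_combination -(ψ t) * h1
  have hcn : IntervalIntegrable (fun s => ‖c s‖) volume 0 T := hci.norm
  have hcnt : IntervalIntegrable (fun s => ‖c s‖) volume 0 t := (aux_sub hci h0T (sub htt)).norm
  rw [hψt, mul_add]
  refine (norm_add_le _ _).trans (add_le_add ?_ ?_)
  · rw [norm_mul]
    exact mul_le_mul_of_nonneg_right (hexp 0 h0t) (norm_nonneg _)
  · calc _ ≤ ∫ s in (0:ℝ)..t, C * ‖c s‖ := by
          apply intervalIntegral.norm_integral_le_of_norm_le ht.1 _ (hcnt.const_mul C)
          apply ae_of_all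
          intro s hs
          rw [norm_mul]
          exact mul_le_mul_of_nonneg_right (hexp s (Ioc_subset_Icc_self hs)) (norm_nonneg _)
      _ = C * ∫ s in (0:ℝ)..t, ‖c s‖ := intervalIntegral.integral_const_mul _ _
      _ ≤ _ := by
          gcongr
          exact intervalIntegral.integral_mono_interval le_rfl ht.1 (ht.2.trans ht2)
            (ae_of_all _ fun _ => norm_nonneg _) hcn
end

section
/- Fix $\epsilon>0$, $H\in(-1/2,1/2)$, and let $K_{H,\epsilon}(t)=(t+\epsilon)^{H-1/2}$. Suppose $L_\epsilon(dt)=\frac{\delta_0(dt)}{K_{H,\epsilon}(0)}+\ell_\epsilon(t)dt$ is a resolvent of the first kind of $K_{H,\epsilon}$, i.e. $\int_{[0,t]}K_{H,\epsilon}(t-s)L_\epsilon(ds)=1$ for all $t\ge 0$, with $\ell_\epsilon$ locally integrable. Then $(K'_{H,\epsilon}*L_\epsilon)(0)=K'_{H,\epsilon}(0)/K_{H,\epsilon}(0)=(H-1/2)\epsilon^{-1}$, and almost everywhere $K'_{H,\epsilon} = (H-\tfrac{1}{2})\epsilon^{-1}K_{H,\epsilon} + (K'_{H,\epsilon}*L_\epsilon)'*K_{H,\epsilon}$,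 where $(K'_{H,\epsilon}*L_\epsilon)$ is continuously differentiable. -/
open MeasureTheory Set intervalIntegral

/-- The shifted fractional kernel. -/
noncomputable def Kf (ε H t : ℝ) : ℝ := (t + ε) ^ (H - 1/2)

/-- Its derivative. -/
noncomputable def Kf' (ε H t : ℝ) : ℝ := (H - 1/2) * (t + ε) ^ (H - 3/2)

/-- Convolution of `f` with the measure `L_ε(ds) = δ₀(ds)/K(0) + ℓ(s)ds`. -/
noncomputable def convL (ε H : ℝ) (ℓ : ℝ → ℝ) (f : ℝ → ℝ) (t : ℝ) : ℝ :=
  f t / Kf ε H 0 + ∫ s in (0:ℝ)..t, f (t - s) * ℓ s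

noncomputable def cv (f g : ℝ → ℝ) (t : ℝ) : ℝ := ∫ s in (0:ℝ)..t, f (t - s) * g s

theorem li_ii {g : ℝ → ℝ} (hg : LocallyIntegrable g volume) (a b : ℝ) :
    IntervalIntegrable g volume a b :=
  intervalIntegrable_iff.mpr <|
      (hg.integrableOn_isCompact isCompact_uIcc).mono_set uIoc_subset_uIcc

theorem cont_ii {a g : ℝ → ℝ} (ha : Continuous a) (hg : LocallyIntegrable g volume) (t x y : ℝ) :
    IntervalIntegrable (fun s => a (t - s) * g s) volume x y :=
  (li_ii hg x y).continuousOn_mul (by fun_prop)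

theorem cv_comm (f g : ℝ → ℝ) (t : ℝ) : cv f g t = cv g f t := by
  unfold cv
  have := intervalIntegral.integral_comp_sub_left (a := 0) (b := t)
    (fun s => g (t - s) * f s) t
  simp only [sub_sub_cancel, sub_self, sub_zero] at this
  rw [← this]
  exact intervalIntegral.integral_congr fun s _ => mul_comm _ _

theorem cv_continuous {a g : ℝ → ℝ} (ha : Continuous a) (hg : LocallyIntegrable g volume) :
    Continuous (cv a g) := by
  rw [continuous_iff_continuousAt]
  intro t
  set R := |t| + 1 with hR
  obtain ⟨C, hC⟩ := (isCompact_Icc (a := -(2*R)) (b := 2*R)).exists_bound_of_continuousOn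
    ha.continuousOn
  have ht := abs_lt.1 (show |t| < R by linarith)
  have hR0 : 0 < R := by positivity
  have key : ContinuousAt (fun p : ℝ × ℝ ↦ ∫ s in (0:ℝ)..p.2, a (p.1 - s) * g s) (t, t) := by
    refine intervalIntegral.continuousAt_parametric_primitive_of_dominated
      (F := fun x s => a (x - s) * g s) (fun s => C * ‖g s‖) (-R) R ?_ ?_ ?_ ?_ ?_ ?_ ?_
    · intro x
      exact ((ha.comp (by fun_prop : Continuous fun s => x - s)).aestronglyMeasurable).mul
        hg.aestronglyMeasurable.restrict
    · filter_upwards [Ioo_mem_nhds ht.1 ht.2] with x hx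
      refine (ae_restrict_mem measurableSet_uIoc).mono fun s hs => ?_
      rw [uIoc_of_le (by linarith)] at hs
      rw [norm_mul]
      gcongr
      exact hC _ ⟨by linarith [hs.2, hx.1], by linarith [hs.1, hx.2]⟩
    · exact (li_ii hg _ _).norm.const_mul C
    · exact Filter.Eventually.of_forall fun s => by fun_prop
    · exact ⟨by linarith, hR0⟩
    · exact ⟨ht.1, ht.2⟩
    · simp
  exact key.comp (f := fun x : ℝ => (x, x)) (by fun_prop)

theorem cv_assoc {a b g : ℝ → ℝ} (ha : Continuous a) (hb : Continuous b)
    (hg : LocallyIntegrable g volume) {t : ℝ} (ht : 0 ≤ t) :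
    cv a (cv b g) t = cv (cv a b) g t := by
  set Φ : ℝ → ℝ → ℝ := fun r s =>
    ({p : ℝ × ℝ | p.2 ≤ p.1}.indicator (fun p => a (t - p.1) * b (p.1 - p.2)) (r, s)) * g s with hΦ
  have hmeas : MeasurableSet {p : ℝ × ℝ | p.2 ≤ p.1} := measurableSet_le measurable_snd measurable_fst
  have hcont : Continuous (fun p : ℝ × ℝ => a (t - p.1) * b (p.1 - p.2)) := by fun_prop
  obtain ⟨C, hC⟩ := (isCompact_Icc (a := (0:ℝ)) (b := t)).prod (isCompact_Icc (a := (0:ℝ)) (b := t))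
    |>.exists_bound_of_continuousOn hcont.continuousOn
  have hint : Integrable (Function.uncurry Φ)
      ((volume.restrict (Ioc 0 t)).prod (volume.restrict (Ioc 0 t))) := by
    have h1 : Integrable g (volume.restrict (Ioc 0 t)) :=
      (hg.integrableOn_isCompact (isCompact_Icc (a := 0) (b := t))).mono_set Ioc_subset_Icc_self
    have h2 := h1.comp_snd (volume.restrict (Ioc 0 t))
    refine h2.bdd_mul (c := C) (hcont.stronglyMeasurable.indicator hmeas).aestronglyMeasurable ?_
    rw [Measure.prod_restrict]
    refine (ae_restrict_mem (measurableSet_Ioc.prod measurableSet_Ioc)).mono fun p hp => ?_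
    refine (norm_indicator_le_norm_self _ _).trans (hC p ?_)
    exact ⟨Ioc_subset_Icc_self hp.1, Ioc_subset_Icc_self hp.2⟩
  have hL : cv a (cv b g) t = ∫ r in Ioc 0 t, ∫ s in Ioc 0 t, Φ r s := by
    unfold cv
    rw [intervalIntegral.integral_of_le ht]
    refine setIntegral_congr_fun measurableSet_Ioc fun r hr => ?_
    rw [← intervalIntegral.integral_const_mul, intervalIntegral.integral_of_le hr.1.le]
    have : ∀ s, Φ r s = (Iic r).indicator (fun s => a (t - r) * (b (r - s) * g s)) s := by
      intro s
      by_cases h : s ≤ r <;> simp [hΦ, indicator, h, mul_assoc]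
    simp only [this]
    rw [setIntegral_indicator measurableSet_Iic]
    congr 2
    ext s
    simp only [mem_Ioc, mem_inter_iff, mem_Iic]
    constructor
    · rintro ⟨h1, h2⟩; exact ⟨⟨h1, h2.trans hr.2⟩, h2⟩
    · rintro ⟨⟨h1, _⟩, h2⟩; exact ⟨h1, h2⟩
  rw [hL, integral_integral_swap hint]
  conv_rhs => unfold cv
  rw [intervalIntegral.integral_of_le ht]
  refine setIntegral_congr_fun measurableSet_Ioc fun s hs => ?_
  simp only [hΦ]
  rw [MeasureTheory.integral_mul_const]
  congr 1
  have : ∀ r, {p : ℝ × ℝ | p.2 ≤ p.1}.indicator (fun p => a (t - p.1) * b (p.1 - p.2)) (r, s)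
      = (Ici s).indicator (fun r => a (t - r) * b (r - s)) r := by
    intro r
    by_cases h : s ≤ r <;> simp [indicator, h]
  simp only [this]
  rw [setIntegral_indicator measurableSet_Ici]
  have hset : Ioc 0 t ∩ Ici s = Icc s t := by
    ext r
    simp only [mem_Ioc, mem_inter_iff, mem_Ici, mem_Icc]
    constructor
    · rintro ⟨⟨_, h1⟩, h2⟩; exact ⟨h2, h1⟩
    · rintro ⟨h1, h2⟩; exact ⟨⟨hs.1.trans_le h1, h2⟩, h1⟩
  rw [hset, integral_Icc_eq_integral_Ioc, ← intervalIntegral.integral_of_le hs.2]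
  have h3 := intervalIntegral.integral_comp_sub_right (a := s) (b := t)
    (fun u => a (t - s - u) * b u) s
  simp only [sub_self] at h3
  rw [← h3]
  refine intervalIntegral.integral_congr fun r _ => ?_
  congr 2
  ring

theorem cv_prim {k κ g : ℝ → ℝ} (hκ : Continuous κ) (hk : ∀ x, 0 ≤ x → k x = k 0 + ∫ u in (0:ℝ)..x, κ u)
    (hg : LocallyIntegrable g volume) {t : ℝ} (ht : 0 ≤ t) :
    cv k g t = k 0 * (∫ s in (0:ℝ)..t, g s) + ∫ r in (0:ℝ)..t, cv κ g r := by
  have h1 := cv_assoc (a := fun _ => 1) continuous_const hκ hg ht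
  have h2 : cv (fun _ => 1) (cv κ g) t = ∫ r in (0:ℝ)..t, cv κ g r := by
    simp [cv]
  have hc := cv_continuous (a := fun _ => 1) continuous_const hκ.locallyIntegrable
  rw [← h2, h1]
  unfold cv at hc ⊢
  rw [← intervalIntegral.integral_const_mul, ← intervalIntegral.integral_add
    ((li_ii hg _ _).const_mul _) (cont_ii hc hg _ _ _)]
  refine intervalIntegral.integral_congr fun s hs => ?_
  rw [uIcc_of_le ht] at hs
  simp only [one_mul]
  rw [hk (t - s) (by linarith [hs.2])]
  ring

theorem ae_zero {f : ℝ → ℝ} (hf : LocallyIntegrable f volume)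
    (h : ∀ t, 0 ≤ t → ∫ s in (0:ℝ)..t, f s = 0) :
    ∀ᵐ t ∂(volume.restrict (Ici (0:ℝ))), f t = 0 := by
  rw [← restrict_Ioi_eq_restrict_Ici, ae_restrict_iff' measurableSet_Ioi]
  filter_upwards [LocallyIntegrable.ae_hasDerivAt_integral hf] with x hx hx0
  have h1 := hx 0
  have h2 : HasDerivAt (fun x => ∫ (t : ℝ) in (0:ℝ)..x, f t) 0 x := by
    refine (hasDerivAt_const x (0:ℝ)).congr_of_eventuallyEq ?_
    filter_upwards [Ioi_mem_nhds hx0] with y hy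
    exact h y (le_of_lt hy)
  exact h1.unique h2

theorem cv_congr {f f' g g' : ℝ → ℝ} (hf : ∀ x, 0 ≤ x → f x = f' x) (hg : ∀ x, 0 ≤ x → g x = g' x)
    {t : ℝ} (ht : 0 ≤ t) : cv f g t = cv f' g' t := by
  refine intervalIntegral.integral_congr fun s hs => ?_
  rw [uIcc_of_le ht] at hs
  rw [hf _ (by linarith [hs.2]), hg _ hs.1]

theorem cv_congr_ae {f g g' : ℝ → ℝ} (hg : ∀ᵐ t ∂(volume.restrict (Ici (0:ℝ))), g t = g' t)
    {t : ℝ} (ht : 0 ≤ t) : cv f g t = cv f g' t := by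
  refine intervalIntegral.integral_congr_ae ?_
  rw [ae_restrict_iff' measurableSet_Ici] at hg
  filter_upwards [hg] with s hs hs'
  rw [uIoc_of_le ht] at hs'
  rw [hs hs'.1.le]

/-- abstract version -/
theorem abstract_res {k0 k1 k2 ℓ : ℝ → ℝ} (h0 : Continuous k0) (h1 : Continuous k1)
    (h2 : Continuous k2)
    (h01 : ∀ x, 0 ≤ x → k0 x = k0 0 + ∫ u in (0:ℝ)..x, k1 u)
    (h12 : ∀ x, 0 ≤ x → k1 x = k1 0 + ∫ u in (0:ℝ)..x, k2 u)
    (hK : k0 0 ≠ 0) (hℓ : LocallyIntegrable ℓ volume)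
    (hres : ∀ t, 0 ≤ t → k0 t / k0 0 + cv k0 ℓ t = 1) :
    ∃ D : ℝ → ℝ, Continuous D ∧
      (∀ t, 0 ≤ t → k1 t / k0 0 + cv k1 ℓ t = k1 0 / k0 0 + ∫ u in (0:ℝ)..t, D u) ∧
      ∀ᵐ t ∂(volume.restrict (Ici (0:ℝ))), k1 t = k1 0 / k0 0 * k0 t + cv D k0 t := by
  have hc1 : Continuous (cv k1 ℓ) := cv_continuous h1 hℓ
  set G : ℝ → ℝ := fun t => k1 t / k0 0 + cv k1 ℓ t with hG
  have hGc : Continuous G := (h1.div_const _).add hc1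
  -- step (ii)
  have hae : ∀ᵐ t ∂(volume.restrict (Ici (0:ℝ))), G t + k0 0 * ℓ t = 0 := by
    refine ae_zero (hGc.locallyIntegrable.add (hℓ.smul (k0 0))) fun t ht => ?_
    rw [intervalIntegral.integral_add (hGc.intervalIntegrable _ _) ((li_ii hℓ _ _).const_mul _),
      intervalIntegral.integral_add ((h1.div_const _).intervalIntegrable _ _)
        (hc1.intervalIntegrable _ _), intervalIntegral.integral_div,
      intervalIntegral.integral_const_mul]
    have e1 := hres t ht
    rw [cv_prim h1 h01 hℓ ht, h01 t ht, add_div, div_self hK] at e1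
    linarith
  set m : ℝ → ℝ := fun t => - G t / k0 0 with hm
  have hmc : Continuous m := hGc.neg.div_const _
  have hae' : ∀ᵐ t ∂(volume.restrict (Ici (0:ℝ))), ℓ t = m t := by
    filter_upwards [hae] with t ht
    simp only [hm]
    field_simp
    linarith
  have hc2 : Continuous (cv k2 m) := cv_continuous h2 hmc.locallyIntegrable
  set D : ℝ → ℝ := fun t => k2 t / k0 0 + (k1 0 * m t + cv k2 m t) with hD
  have hDc : Continuous D := by fun_prop
  have hGD : ∀ t, 0 ≤ t → G t = k1 0 / k0 0 + ∫ u in (0:ℝ)..t, D u := by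
    intro t ht
    have i1 : Continuous fun t => k1 0 * m t := by fun_prop
    have i2 : Continuous fun t => k1 0 * m t + cv k2 m t := i1.add hc2
    simp only [hD]
    rw [intervalIntegral.integral_add ((h2.div_const _).intervalIntegrable _ _)
      (i2.intervalIntegrable _ _), intervalIntegral.integral_add
      (i1.intervalIntegrable _ _) (hc2.intervalIntegrable _ _), intervalIntegral.integral_div,
      intervalIntegral.integral_const_mul]
    have e1 := cv_prim h2 h12 hmc.locallyIntegrable ht
    simp only [hG]
    rw [cv_congr_ae hae' ht, e1, h12 t ht, add_div]
    ring
  have hG0 : G 0 = k1 0 / k0 0 := by simpa using hGD 0 le_rfl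
  refine ⟨D, hDc, hGD, ?_⟩
  have hcD : Continuous (cv D k0) := cv_continuous hDc h0.locallyIntegrable
  have hfin : ∀ᵐ t ∂(volume.restrict (Ici (0:ℝ))),
      k1 t - (G 0 * k0 t + cv D k0 t) = 0 := by
    have c1 : Continuous fun t => G 0 * k0 t := by fun_prop
    have c2 : Continuous fun t => G 0 * k0 t + cv D k0 t := c1.add hcD
    refine ae_zero (by fun_prop : Continuous _).locallyIntegrable fun t ht => ?_
    rw [intervalIntegral.integral_sub (h1.intervalIntegrable _ _)
      (c2.intervalIntegrable _ _), intervalIntegral.integral_add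
      (c1.intervalIntegrable _ _) (hcD.intervalIntegrable _ _),
      intervalIntegral.integral_const_mul, ← cv_prim hDc (by rw [hG0]; exact hGD)
        h0.locallyIntegrable ht, cv_comm]
    -- cv k0 G = ∫ k1
    have e1 : cv k0 G t = cv k0 k1 t / k0 0 + cv k0 (cv k1 ℓ) t := by
      unfold cv at hc1 ⊢
      rw [← intervalIntegral.integral_div, ← intervalIntegral.integral_add
        (((cont_ii h0 h1.locallyIntegrable _ _ _)).div_const _)
        (cont_ii h0 hc1.locallyIntegrable _ _ _)]
      refine intervalIntegral.integral_congr fun s _ => ?_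
      simp only [hG, cv]
      ring
    have e2 : cv k0 (cv k1 ℓ) t = cv k1 (cv k0 ℓ) t := by
      rw [cv_assoc h0 h1 hℓ ht, cv_assoc h1 h0 hℓ ht]
      congr 1
      ext x
      exact cv_comm _ _ _
    have e3 : cv k1 (cv k0 ℓ) t = cv k1 (fun x => 1 - k0 x / k0 0) t :=
      cv_congr (fun _ _ => rfl) (fun x hx => by linarith [hres x hx]) ht
    have e4 : cv k1 (fun x => 1 - k0 x / k0 0) t
        = cv k1 (fun _ => 1) t - cv k1 k0 t / k0 0 := by
      unfold cv
      rw [← intervalIntegral.integral_div, ← intervalIntegral.integral_sub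
        (cont_ii h1 continuous_const.locallyIntegrable _ _ _)
        (((cont_ii h1 h0.locallyIntegrable _ _ _)).div_const _)]
      refine intervalIntegral.integral_congr fun s _ => ?_
      simp only
      ring
    have e5 : cv k1 (fun _ => 1) t = ∫ s in (0:ℝ)..t, k1 s := by
      rw [cv_comm]; simp [cv]
    rw [e1, e2, e3, e4, e5, cv_comm k0 k1]
    ring
  filter_upwards [hfin] with t ht
  rw [← hG0]
  linarith

theorem prim_pow (ε c p : ℝ) (hε : 0 < ε) (x : ℝ) (hx : 0 ≤ x) :
    c * (max x 0 + ε) ^ p = c * (max 0 0 + ε) ^ p +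
      ∫ u in (0:ℝ)..x, c * p * (max u 0 + ε) ^ (p - 1) := by
  have h : ∀ u ∈ uIcc 0 x, HasDerivAt (fun u => c * (u + ε) ^ p) (c * p * (u + ε) ^ (p - 1)) u := by
    intro u hu
    rw [uIcc_of_le hx] at hu
    have h1 : HasDerivAt (fun u : ℝ => u + ε) 1 u := (hasDerivAt_id u).add_const ε
    have := (h1.rpow_const (p := p) (Or.inl (by linarith [hu.1]))).const_mul c
    exact this.congr_deriv (by ring)
  have hcg : ∫ u in (0:ℝ)..x, c * p * (max u 0 + ε) ^ (p - 1)
      = ∫ u in (0:ℝ)..x, c * p * (u + ε) ^ (p - 1) := by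
    refine intervalIntegral.integral_congr fun u hu => ?_
    rw [uIcc_of_le hx] at hu
    simp only [max_eq_left hu.1]
  rw [hcg, intervalIntegral.integral_eq_sub_of_hasDerivAt h, max_eq_left hx, max_self]
  · ring
  · refine ContinuousOn.intervalIntegrable fun u hu => ?_
    rw [uIcc_of_le hx] at hu
    refine ContinuousAt.continuousWithinAt ?_
    refine continuousAt_const.mul (ContinuousAt.rpow_const (by fun_prop) (Or.inl ?_))
    linarith [hu.1]

theorem cont_pow (ε c p : ℝ) (hε : 0 < ε) : Continuous fun x : ℝ => c * (max x 0 + ε) ^ p := by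
  refine continuous_const.mul (Continuous.rpow_const (by fun_prop) fun x => Or.inl ?_)
  have := le_max_right x 0
  linarith

theorem stmt15 (ε H : ℝ) (hε : 0 < ε) (hH : H ∈ Ioo (-(1:ℝ)/2) (1/2))
    (ℓ : ℝ → ℝ) (hℓ : LocallyIntegrable ℓ volume)
    (hres : ∀ t : ℝ, 0 ≤ t → convL ε H ℓ (Kf ε H) t = 1) :
    convL ε H ℓ (Kf' ε H) 0 = (H - 1/2) / ε ∧
    (∀ t : ℝ, 0 ≤ t → ContDiffWithinAt ℝ 1 (convL ε H ℓ (Kf' ε H)) (Ici 0) t) ∧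
    ∀ᵐ t ∂(volume.restrict (Ici (0:ℝ))),
      Kf' ε H t = (H - 1/2) * ε⁻¹ * Kf ε H t
        + ∫ s in (0:ℝ)..t, derivWithin (convL ε H ℓ (Kf' ε H)) (Ici 0) (t - s) * Kf ε H s := by
  have q1 : H - 1/2 - 1 = H - 3/2 := by ring
  set k0 : ℝ → ℝ := fun x => 1 * (max x 0 + ε) ^ (H - 1/2) with hk0
  set k1 : ℝ → ℝ := fun x => (H - 1/2) * (max x 0 + ε) ^ (H - 3/2) with hk1
  set k2 : ℝ → ℝ := fun x => (H - 1/2) * (H - 3/2) * (max x 0 + ε) ^ (H - 3/2 - 1) with hk2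
  have E0 : ∀ x, 0 ≤ x → Kf ε H x = k0 x := fun x hx => by simp [hk0, Kf, max_eq_left hx]
  have E1 : ∀ x, 0 ≤ x → Kf' ε H x = k1 x := fun x hx => by simp [hk1, Kf', max_eq_left hx]
  have hK : k0 0 ≠ 0 := by
    simp only [hk0, max_self, zero_add, one_mul]
    exact (Real.rpow_pos_of_pos hε _).ne'
  have hrat : k1 0 / k0 0 = (H - 1/2) / ε := by
    simp only [hk0, hk1, max_self, zero_add, one_mul]
    rw [← q1, Real.rpow_sub_one hε.ne']
    have := (Real.rpow_pos_of_pos hε (H - 1/2)).ne'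
    field_simp
  have hL : ∀ t, 0 ≤ t → convL ε H ℓ (Kf' ε H) t = k1 t / k0 0 + cv k1 ℓ t := by
    intro t ht
    rw [← cv_congr E1 (fun _ _ => rfl) ht, ← E1 t ht, ← E0 0 le_rfl]
    rfl
  obtain ⟨D, hDc, hD, hae⟩ := abstract_res (k0 := k0) (k1 := k1) (k2 := k2) (ℓ := ℓ)
    (cont_pow _ _ _ hε) (cont_pow _ _ _ hε) (cont_pow _ _ _ hε)
    (fun x hx => by
      have := prim_pow ε 1 (H - 1/2) hε x hx
      rw [q1, one_mul (H - 1/2)] at this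
      exact this)
    (fun x hx => prim_pow ε (H - 1/2) (H - 3/2) hε x hx) hK hℓ
    (fun t ht => by
      rw [← hres t ht, ← cv_congr E0 (fun _ _ => rfl) ht, ← E0 t ht, ← E0 0 le_rfl]
      rfl)
  set P : ℝ → ℝ := fun t => k1 0 / k0 0 + ∫ u in (0:ℝ)..t, D u with hP
  have hPd : ∀ t, HasDerivAt P (D t) t := fun t =>
    (intervalIntegral.integral_hasDerivAt_right (hDc.intervalIntegrable _ _)
      (hDc.stronglyMeasurableAtFilter _ _) hDc.continuousAt).const_add _
  have hPc : ContDiff ℝ 1 P := by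
    rw [contDiff_one_iff_deriv]
    refine ⟨fun t => (hPd t).differentiableAt, ?_⟩
    rw [show deriv P = D from funext fun t => (hPd t).deriv]
    exact hDc
  have hLP : ∀ t, 0 ≤ t → convL ε H ℓ (Kf' ε H) t = P t := fun t ht => by
    rw [hL t ht, hD t ht]
  have hder : ∀ t, 0 ≤ t → derivWithin (convL ε H ℓ (Kf' ε H)) (Ici 0) t = D t := by
    intro t ht
    have := ((hPd t).hasDerivWithinAt (s := Ici 0)).congr (fun y hy => hLP y hy) (hLP t ht)
    exact this.derivWithin (uniqueDiffOn_Ici 0 t ht)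
  refine ⟨?_, ?_, ?_⟩
  · rw [hLP 0 le_rfl, ← hrat]
    simp [hP]
  · intro t ht
    exact hPc.contDiffAt.contDiffWithinAt.congr (fun y hy => hLP y hy) (hLP t ht)
  · filter_upwards [hae, ae_restrict_mem measurableSet_Ici] with t ht ht0
    rw [E1 t ht0, E0 t ht0, ht, hrat, div_eq_mul_inv]
    congr 1
    exact (cv_congr hder E0 ht0).symm
end
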